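/- arXiv:1905.01815 — 2 statements merged into one kernel-verified Lean document; each statement's English description precedes it below -/
import Mathlib

section
/- For every a ∈ F_{q^2}^*: if Tr_{q/r}(a^{q+1}) = 0 or η(−Tr_{q/r}(a^{q+1})) = 1, then Σ_{x∈D} χ(ax) = q(r−1)/(2r); and if η(−Tr_{q/r}(a^{q+1})) = −1, then Σ_{x∈D} χ(ax) = −q(r+1)/(2r). -/
open Finset

/-!
Write `T x = Tr_{q/r}(x^{q+1})`, and let `ψ` be an additive character of `F_r` with `χ = ψ ∘ Tr`.
For `c ∈ F_r^*`, completing the square in the Hermitian form `c x^{q+1}` gives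
`∑_x χ(ax) ψ(c T(x)) = -q ψ(-T(a) / c)`. Averaging these twists over all `c` yields the sum of
`χ(ax)` over the zeros of `T`; averaging them against `η(c)` yields `∑_x η(T(x)) χ(ax)`, as the two
sides produce the same quadratic Gauss sum. Since `1 - 1_{u = 0} - η(u)` is twice the indicator of
`η(u) = -1`, these two sums determine the sum over `D`.
-/

section TraceCharacters

variable {K L M : Type*} [Field K] [Field L] [Algebra K L] [CommMonoid M]

/-- The lift of an additive character of `K` to an extension field `L` along the trace; the
canonical character of a finite field is the lift of the standard one of its prime field. -/
noncomputable def traceAddChar (L : Type*) [Field L] [Algebra K L] (ψ : AddChar K M) :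
    AddChar L M :=
  ψ.compAddMonoidHom (Algebra.trace K L).toAddMonoidHom

theorem traceAddChar_apply (ψ : AddChar K M) (x : L) :
    traceAddChar L ψ x = ψ (Algebra.trace K L x) :=
  rfl

theorem traceAddChar_trans {F : Type*} [Field F] [Algebra K F] [Algebra F L] [IsScalarTower K F L]
    [FiniteDimensional K F] [FiniteDimensional F L] (ψ : AddChar K M) :
    traceAddChar L (traceAddChar F ψ) = traceAddChar L ψ :=
  DFunLike.ext _ _ fun x ↦ congrArg ψ (Algebra.trace_trace (R := K) (S := F) x)

theorem isPrimitive_traceAddChar [FiniteDimensional K L] [Algebra.IsSeparable K L]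
    {ψ : AddChar K M} (hψ : ψ.IsPrimitive) : (traceAddChar L ψ).IsPrimitive := by
  obtain ⟨y, hy⟩ := AddChar.ne_one_iff.mp (hψ one_ne_zero)
  obtain ⟨x, rfl⟩ := Algebra.trace_surjective K L y
  rw [AddChar.mulShift_apply, one_mul] at hy
  exact AddChar.IsPrimitive.of_ne_one (AddChar.ne_one_iff.mpr ⟨x, hy⟩)

theorem exists_isPrimitive_traceAddChar_eq (K : Type*) [Field K] [Algebra K L] [Finite L] {p : ℕ}
    [Fact p.Prime] [Algebra (ZMod p) L] {φ : AddChar (ZMod p) M} (hφ : φ.IsPrimitive) :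
    ∃ ψ : AddChar K M, ψ.IsPrimitive ∧ traceAddChar L ψ = traceAddChar L φ := by
  have : Finite K := Finite.of_injective _ (algebraMap K L).injective
  have : CharP L p := charP_of_injective_algebraMap (algebraMap (ZMod p) L).injective p
  have : CharP K p := ((algebraMap K L).charP_iff (algebraMap K L).injective p).mpr this
  let : Algebra (ZMod p) K := ZMod.algebra K p
  have : IsScalarTower (ZMod p) K L := .of_algebraMap_eq' (Subsingleton.elim _ _)
  exact ⟨traceAddChar K φ, isPrimitive_traceAddChar hφ, traceAddChar_trans φ⟩

end TraceCharacters

section Norm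

variable {F L R : Type*} [Field F] [Field L] [Fintype L] [Algebra F L]

theorem sum_addChar_mul_norm_eq_sum_addChar_norm [Semiring R] (ψ : AddChar F R) {c : F}
    (hc : c ≠ 0) : ∑ x : L, ψ (c * Algebra.norm F x) = ∑ x : L, ψ (Algebra.norm F x) := by
  obtain ⟨z, rfl⟩ := FiniteField.norm_surjective F L c
  have hz : z ≠ 0 := Algebra.norm_ne_zero_iff.mp hc
  exact Fintype.sum_bijective (z * ·) (mulLeft_bijective₀ z hz) _ _ fun x ↦ by
    rw [map_mul (Algebra.norm F)]

theorem sum_sum_addChar_mul_norm [Fintype F] [CommRing R] [IsDomain R] {ψ : AddChar F R}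
    (hψ : ψ.IsPrimitive) : ∑ c : F, ∑ x : L, ψ (c * Algebra.norm F x) = Fintype.card F := by
  classical
  rw [sum_comm]
  simp_rw [AddChar.sum_mulShift _ hψ, Algebra.norm_eq_zero_iff]
  simp

end Norm

section QuadraticExtension

variable {F L : Type*} [Field F] [Fintype F] [Field L] [Algebra F L]

theorem isQuadraticExtension_of_card_eq_sq [Fintype L]
    (h : Fintype.card L = Fintype.card F ^ 2) : Algebra.IsQuadraticExtension F L where
  finrank_eq_two' :=
    Nat.pow_right_injective Fintype.one_lt_card (Module.card_eq_pow_finrank.symm.trans h)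

variable [Algebra.IsQuadraticExtension F L]

variable (F) in
theorem card_eq_sq_of_isQuadraticExtension [Fintype L] : Fintype.card L = Fintype.card F ^ 2 := by
  rw [Module.card_eq_pow_finrank (K := F), Algebra.IsQuadraticExtension.finrank_eq_two F L]

theorem algebraMap_norm_eq_pow_card_succ (x : L) :
    algebraMap F L (Algebra.norm F x) = x ^ (Fintype.card F + 1) := by
  have : Finite L := Module.finite_of_finite F
  rw [FiniteField.algebraMap_norm_eq_prod_pow, Algebra.IsQuadraticExtension.finrank_eq_two F L,
    prod_range_succ, prod_range_one, pow_zero, pow_one, pow_one, Nat.card_eq_fintype_card,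
    pow_succ']

theorem algebraMap_trace_eq_add_pow_card (x : L) :
    algebraMap F L (Algebra.trace F L x) = x + x ^ Fintype.card F := by
  have : Finite L := Module.finite_of_finite F
  rw [FiniteField.algebraMap_trace_eq_sum_pow, Algebra.IsQuadraticExtension.finrank_eq_two F L,
    sum_range_succ, sum_range_one, pow_zero, pow_one, pow_one, Nat.card_eq_fintype_card]

theorem trace_mul_add_mul_norm (a x : L) {c : F} (hc : c ≠ 0) :
    Algebra.trace F L (a * x) + c * Algebra.norm F x =
      c * Algebra.norm F (x + a ^ Fintype.card F / algebraMap F L c) - Algebra.norm F a / c := by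
  apply (algebraMap F L).injective
  have hc' : algebraMap F L c ≠ 0 := by simpa using hc
  have add_pow_card (u v : L) :
      (u + v) ^ Fintype.card F = u ^ Fintype.card F + v ^ Fintype.card F :=
    map_add (FiniteField.frobeniusAlgHom F L) u v
  have algebraMap_pow_card : algebraMap F L c ^ Fintype.card F = algebraMap F L c := by
    rw [← map_pow, FiniteField.pow_card]
  have := Module.finite_of_finite F (M := L)
  let := Fintype.ofFinite L
  have pow_card_pow_card : (a ^ Fintype.card F) ^ Fintype.card F = a := by
    rw [← pow_mul, ← sq, ← card_eq_sq_of_isQuadraticExtension F (L := L), FiniteField.pow_card]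
  simp only [map_add, map_sub, map_mul, map_div₀, algebraMap_norm_eq_pow_card_succ,
    algebraMap_trace_eq_add_pow_card, pow_succ, mul_pow, div_pow, add_pow_card,
    algebraMap_pow_card, pow_card_pow_card]
  field_simp
  ring

variable [Fintype L] {R : Type*} [CommRing R] [IsDomain R] [CharZero R]

theorem sum_addChar_mul_norm {ψ : AddChar F R} (hψ : ψ.IsPrimitive) {c : F} (hc : c ≠ 0) :
    ∑ x : L, ψ (c * Algebra.norm F x) = -(Fintype.card F : R) := by
  classical
  have hq : (Fintype.card F : R) - 1 ≠ 0 :=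
    sub_ne_zero.mpr (Nat.cast_ne_one.mpr Fintype.one_lt_card.ne')
  have htotal : (Fintype.card F : R) ^ 2 +
      (Fintype.card F - 1) * ∑ x : L, ψ (Algebra.norm F x) = Fintype.card F := by
    have hsum := sum_sum_addChar_mul_norm (L := L) hψ
    rw [← add_sum_erase _ _ (mem_univ (0 : F)),
      sum_congr rfl fun d hd ↦ sum_addChar_mul_norm_eq_sum_addChar_norm ψ (ne_of_mem_erase hd)]
      at hsum
    simpa [card_eq_sq_of_isQuadraticExtension F (L := L), Nat.cast_sub Fintype.card_pos]
      using hsum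
  rw [sum_addChar_mul_norm_eq_sum_addChar_norm ψ hc]
  apply mul_left_cancel₀ hq
  linear_combination htotal

theorem sum_traceAddChar_mul_addChar_mul_norm {ψ : AddChar F R} (hψ : ψ.IsPrimitive) (a : L)
    {c : F} (hc : c ≠ 0) :
    ∑ x : L, traceAddChar L ψ (a * x) * ψ (c * Algebra.norm F x) =
      -(Fintype.card F : R) * ψ (-Algebra.norm F a / c) := by
  set b := a ^ Fintype.card F / algebraMap F L c
  calc ∑ x : L, traceAddChar L ψ (a * x) * ψ (c * Algebra.norm F x)
    _ = ∑ x : L, ψ (c * Algebra.norm F (x + b)) * ψ (-Algebra.norm F a / c) :=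
      sum_congr rfl fun x _ ↦ by
        rw [traceAddChar_apply, ← ψ.map_add_eq_mul, trace_mul_add_mul_norm a x hc,
          ← ψ.map_add_eq_mul, neg_div, sub_eq_add_neg]
    _ = -(Fintype.card F : R) * ψ (-Algebra.norm F a / c) := by
      rw [← sum_mul, ← sum_addChar_mul_norm (L := L) hψ hc,
        ← Equiv.sum_comp (Equiv.addRight b) fun x ↦ ψ (c * Algebra.norm F x)]
      rfl

theorem sum_traceAddChar_mul_addChar_mul_trace_norm {K : Type*} [Field K] [Algebra K F]
    [Algebra K L] [IsScalarTower K F L] {ψ : AddChar K R} (hψ : ψ.IsPrimitive) (a : L) {c : K}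
    (hc : c ≠ 0) :
    ∑ x : L, traceAddChar L ψ (a * x) * ψ (c * Algebra.trace K F (Algebra.norm F x)) =
      -(Fintype.card F : R) * ψ (-Algebra.trace K F (Algebra.norm F a) / c) := by
  have : Finite K := Finite.of_injective _ (algebraMap K F).injective
  have addChar_mul_trace (d : K) (y : F) :
      ψ (d * Algebra.trace K F y) = traceAddChar F ψ (algebraMap K F d * y) := by
    rw [traceAddChar_apply, ← Algebra.smul_def, map_smul, smul_eq_mul]
  have hc' : algebraMap K F c ≠ 0 := by simpa using hc
  simp_rw [← traceAddChar_trans (F := F) (L := L) ψ, addChar_mul_trace]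
  rw [sum_traceAddChar_mul_addChar_mul_norm (isPrimitive_traceAddChar hψ) a hc', div_eq_inv_mul,
    div_eq_inv_mul, ← map_neg (Algebra.trace K F), addChar_mul_trace, map_inv₀]

end QuadraticExtension

section TwistedSums

variable {K R X : Type*} [Field K] [Fintype K] [Fintype X]

theorem gaussSum_mulShift_of_ne_one [CommRing R] [IsDomain R] {χ : MulChar K R} (hχ : χ ≠ 1)
    (ψ : AddChar K R) (u : K) : gaussSum χ (ψ.mulShift u) = χ⁻¹ u * gaussSum χ ψ := by
  rcases eq_or_ne u 0 with rfl | hu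
  · rw [AddChar.mulShift_zero, gaussSum_one_right hχ, MulChar.map_zero, zero_mul]
  · exact gaussSum_mulShift_eq χ ψ (Units.mk0 u hu)

theorem sum_mulChar_mul_mul_gaussSum_inv [CommRing R] [IsDomain R] {χ : MulChar K R} (hχ : χ ≠ 1)
    {ψ : AddChar K R} {Q : X → K} {g : X → R} {m : R} {A : K}
    (hg : ∀ c : K, c ≠ 0 → ∑ x, g x * ψ (c * Q x) = m * ψ (A / c)) :
    (∑ x, χ (Q x) * g x) * gaussSum χ⁻¹ ψ = m * (χ⁻¹ A * gaussSum χ ψ) :=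
  calc (∑ x, χ (Q x) * g x) * gaussSum χ⁻¹ ψ
    _ = ∑ x, g x * gaussSum χ⁻¹ (ψ.mulShift (Q x)) := by
      rw [sum_mul]
      refine sum_congr rfl fun x _ ↦ ?_
      rw [gaussSum_mulShift_of_ne_one (inv_ne_one.mpr hχ), inv_inv]
      ring
    _ = ∑ c, χ⁻¹ c * ∑ x, g x * ψ (c * Q x) := by
      simp_rw [gaussSum, AddChar.mulShift_apply, mul_sum]
      rw [sum_comm]
      exact sum_congr rfl fun c _ ↦ sum_congr rfl fun x _ ↦ by rw [mul_comm (Q x)]; ring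
    _ = ∑ c, χ⁻¹ c * (m * ψ (A / c)) :=
      sum_congr rfl fun c _ ↦ by
        rcases eq_or_ne c 0 with rfl | hc
        · rw [MulChar.map_zero, zero_mul, zero_mul]
        · rw [hg c hc]
    _ = m * gaussSum χ (ψ.mulShift A) := by
      rw [gaussSum, mul_sum, ← Equiv.sum_comp (Equiv.inv K)]
      refine sum_congr rfl fun c _ ↦ ?_
      rw [Equiv.inv_apply, MulChar.inv_apply', inv_inv, div_inv_eq_mul, AddChar.mulShift_apply]
      ring
    _ = m * (χ⁻¹ A * gaussSum χ ψ) := by rw [gaussSum_mulShift_of_ne_one hχ]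

variable [DecidableEq K]

theorem sum_addChar_div [CommRing R] [IsDomain R] {ψ : AddChar K R} (hψ : ψ.IsPrimitive) (A : K) :
    ∑ c, ψ (A / c) = if A = 0 then (Fintype.card K : R) else 0 := by
  rw [← Equiv.sum_comp (Equiv.inv K)]
  simpa [div_eq_mul_inv, mul_comm A] using AddChar.sum_mulShift A hψ

theorem card_mul_sum_filter_eq_zero [CommRing R] [IsDomain R] {ψ : AddChar K R}
    (hψ : ψ.IsPrimitive) {Q : X → K} {g : X → R} {m : R} {A : K}
    (hg : ∀ c : K, c ≠ 0 → ∑ x, g x * ψ (c * Q x) = m * ψ (A / c)) :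
    Fintype.card K * ∑ x with Q x = 0, g x =
      ∑ x, g x + m * ((if A = 0 then (Fintype.card K : R) else 0) - 1) :=
  calc Fintype.card K * ∑ x with Q x = 0, g x
    _ = ∑ c, ∑ x, g x * ψ (c * Q x) := by
      rw [sum_comm, sum_filter, mul_sum]
      refine sum_congr rfl fun x _ ↦ ?_
      rw [← mul_sum, AddChar.sum_mulShift _ hψ]
      split_ifs <;> simp [mul_comm]
    _ = ∑ x, g x + m * ∑ c ∈ univ.erase 0, ψ (A / c) := by
      rw [← add_sum_erase _ _ (mem_univ (0 : K)),
        sum_congr rfl fun c hc ↦ hg c (ne_of_mem_erase hc), mul_sum]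
      simp
    _ = ∑ x, g x + m * ((if A = 0 then (Fintype.card K : R) else 0) - 1) := by
      rw [sum_erase_eq_sub (mem_univ 0), sum_addChar_div hψ, div_zero, AddChar.map_zero_eq_one]

theorem sum_quadraticChar_mul [CommRing R] [IsDomain R] [CharZero R] (hK : ringChar K ≠ 2)
    {ψ : AddChar K R} (hψ : ψ.IsPrimitive) {Q : X → K} {g : X → R} {m : R} {A : K}
    (hg : ∀ c : K, c ≠ 0 → ∑ x, g x * ψ (c * Q x) = m * ψ (A / c)) :
    ∑ x, (quadraticChar K (Q x) : R) * g x = m * quadraticChar K A := by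
  set η : MulChar K R := (quadraticChar K).ringHomComp (Int.castRingHom R)
  have hη : η ≠ 1 :=
    (MulChar.ringHomComp_ne_one_iff (RingHom.injective_int _)).mpr (quadraticChar_ne_one hK)
  have hη_inv : η⁻¹ = η := ((quadraticChar_isQuadratic K).comp _).inv
  have hG : gaussSum η ψ ≠ 0 :=
    gaussSum_ne_zero_of_nontrivial (Nat.cast_ne_zero.mpr Fintype.card_ne_zero) hη hψ
  have hsum := sum_mulChar_mul_mul_gaussSum_inv hη hg
  rw [hη_inv, ← mul_assoc] at hsum
  exact mul_right_cancel₀ hG hsum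

theorem two_mul_sum_filter_quadraticChar_eq_neg_one [CommRing R] (Q : X → K) (g : X → R) :
    2 * ∑ x with quadraticChar K (Q x) = -1, g x =
      ∑ x, g x - ∑ x with Q x = 0, g x - ∑ x, (quadraticChar K (Q x) : R) * g x := by
  rw [sum_filter, sum_filter, mul_sum, ← sum_sub_distrib, ← sum_sub_distrib]
  refine sum_congr rfl fun x _ ↦ ?_
  rcases eq_or_ne (Q x) 0 with hx | hx
  · simp [hx]
  · rcases quadraticChar_dichotomy hx with h | h
    · simp [h, hx]
    · simp [h, hx, two_mul]

theorem sum_filter_quadraticChar_eq_neg_one [Field R] [CharZero R] (hK : ringChar K ≠ 2)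
    {ψ : AddChar K R} (hψ : ψ.IsPrimitive) {Q : X → K} {g : X → R} {m : R} {A : K}
    (hg : ∀ c : K, c ≠ 0 → ∑ x, g x * ψ (c * Q x) = m * ψ (A / c)) :
    ∑ x with quadraticChar K (Q x) = -1, g x =
      ((1 - 1 / Fintype.card K) * ∑ x, g x -
        m * (quadraticChar K A + (if A = 0 then 1 else 0) - 1 / Fintype.card K)) / 2 := by
  have hr : (Fintype.card K : R) ≠ 0 := Nat.cast_ne_zero.mpr Fintype.card_ne_zero
  have hzero : ∑ x with Q x = 0, g x =
      (∑ x, g x + m * ((if A = 0 then (Fintype.card K : R) else 0) - 1)) / Fintype.card K :=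
    eq_div_of_mul_eq hr (by rw [mul_comm, card_mul_sum_filter_eq_zero hψ hg])
  rw [eq_div_iff two_ne_zero, mul_comm, two_mul_sum_filter_quadraticChar_eq_neg_one, hzero,
    sum_quadraticChar_mul hK hψ hg]
  split_ifs <;> field_simp <;> ring

end TwistedSums

section TraceNorm

variable {K F L R : Type*} [Field K] [Fintype K] [DecidableEq K] [Field F] [Fintype F] [Field L]
  [Fintype L] [Algebra K F] [Algebra F L] [Algebra K L] [IsScalarTower K F L]
  [Algebra.IsQuadraticExtension F L] [Field R] [CharZero R] {ψ : AddChar K R} {a : L}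

theorem sum_filter_quadraticChar_trace_norm (hK : ringChar K ≠ 2) (hψ : ψ.IsPrimitive)
    (ha : a ≠ 0) :
    ∑ x : L with quadraticChar K (Algebra.trace K F (Algebra.norm F x)) = -1,
        traceAddChar L ψ (a * x) =
      Fintype.card F * (quadraticChar K (-Algebra.trace K F (Algebra.norm F a)) +
        (if Algebra.trace K F (Algebra.norm F a) = 0 then 1 else 0) - 1 / Fintype.card K) / 2 := by
  have hsum : ∑ x, traceAddChar L ψ (a * x) = 0 :=
    AddChar.sum_eq_zero_of_ne_one (isPrimitive_traceAddChar hψ ha)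
  rw [sum_filter_quadraticChar_eq_neg_one hK hψ fun c hc ↦
      sum_traceAddChar_mul_addChar_mul_trace_norm hψ a hc, hsum, mul_zero, zero_sub, neg_mul,
    neg_neg]
  simp only [neg_eq_zero]

theorem sum_filter_quadraticChar_trace_norm_of_eq_zero_or_eq_one (hK : ringChar K ≠ 2)
    (hψ : ψ.IsPrimitive) (ha : a ≠ 0)
    (h : Algebra.trace K F (Algebra.norm F a) = 0 ∨
      quadraticChar K (-Algebra.trace K F (Algebra.norm F a)) = 1) :
    ∑ x : L with quadraticChar K (Algebra.trace K F (Algebra.norm F x)) = -1,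
        traceAddChar L ψ (a * x) =
      Fintype.card F * (Fintype.card K - 1) / (2 * Fintype.card K) := by
  have hr : (Fintype.card K : R) ≠ 0 := Nat.cast_ne_zero.mpr Fintype.card_ne_zero
  have hvalue : (quadraticChar K (-Algebra.trace K F (Algebra.norm F a)) : R) +
      (if Algebra.trace K F (Algebra.norm F a) = 0 then 1 else 0) = 1 := by
    rcases eq_or_ne (Algebra.trace K F (Algebra.norm F a)) 0 with hA | hA
    · simp [hA]
    · simp [h.resolve_left hA, hA]
  rw [sum_filter_quadraticChar_trace_norm hK hψ ha, hvalue]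
  field_simp

theorem sum_filter_quadraticChar_trace_norm_of_eq_neg_one (hK : ringChar K ≠ 2)
    (hψ : ψ.IsPrimitive) (ha : a ≠ 0)
    (h : quadraticChar K (-Algebra.trace K F (Algebra.norm F a)) = -1) :
    ∑ x : L with quadraticChar K (Algebra.trace K F (Algebra.norm F x)) = -1,
        traceAddChar L ψ (a * x) =
      -(Fintype.card F * (Fintype.card K + 1)) / (2 * Fintype.card K) := by
  have hr : (Fintype.card K : R) ≠ 0 := Nat.cast_ne_zero.mpr Fintype.card_ne_zero
  have hA : Algebra.trace K F (Algebra.norm F a) ≠ 0 := fun hA ↦ by simp [hA] at h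
  rw [sum_filter_quadraticChar_trace_norm hK hψ ha, h, if_neg hA]
  field_simp
  ring

end TraceNorm

/-- For every `a ∈ F_{q^2}^*`: if `Tr_{q/r}(a^{q+1}) = 0` or
`η(−Tr_{q/r}(a^{q+1})) = 1`, then `Σ_{x∈D} χ(ax) = q(r−1)/(2r)`; and if
`η(−Tr_{q/r}(a^{q+1})) = −1`, then `Σ_{x∈D} χ(ax) = −q(r+1)/(2r)`.  Here `N` records
`N x = x^{q+1} ∈ F_q` and `D = {x ∈ F_{q^2} : η(Tr_{q/r}(x^{q+1})) = −1}`. -/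
theorem stmt8 (p t s : ℕ) [Fact p.Prime] (hp2 : Odd p) (ht : 0 < t) (hs : 0 < s)
    (Fr Fq Fq2 : Type) [Field Fr] [Fintype Fr] [DecidableEq Fr]
    [Field Fq] [Fintype Fq] [Field Fq2] [Fintype Fq2] [DecidableEq Fq2]
    [Algebra (ZMod p) Fq2] [Algebra Fr Fq] [Algebra Fq Fq2]
    (hr : Fintype.card Fr = p ^ t) (hq : Fintype.card Fq = (p ^ t) ^ s)
    (hq2 : Fintype.card Fq2 = ((p ^ t) ^ s) ^ 2)
    (N : Fq2 → Fq) (hN : ∀ x : Fq2, algebraMap Fq Fq2 (N x) = x ^ (Fintype.card Fq + 1))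
    (χ : Fq2 → ℂ)
    (hχ : ∀ x : Fq2, χ x = Complex.exp (2 * Real.pi * Complex.I *
      ((Algebra.trace (ZMod p) Fq2 x).val : ℂ) / (p : ℂ)))
    (D : Finset Fq2)
    (hD : D = Finset.univ.filter
      (fun x : Fq2 => quadraticChar Fr (Algebra.trace Fr Fq (N x)) = -1)) :
    ∀ a : Fq2, a ≠ 0 →
      ((Algebra.trace Fr Fq (N a) = 0 ∨
          quadraticChar Fr (- Algebra.trace Fr Fq (N a)) = 1) →
        ∑ x ∈ D, χ (a * x) =
          ((p : ℂ) ^ t) ^ s * ((p : ℂ) ^ t - 1) / (2 * (p : ℂ) ^ t)) ∧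
      (quadraticChar Fr (- Algebra.trace Fr Fq (N a)) = -1 →
        ∑ x ∈ D, χ (a * x) =
          -(((p : ℂ) ^ t) ^ s * ((p : ℂ) ^ t + 1)) / (2 * (p : ℂ) ^ t)) := by
  intro a ha
  have hr' : (p : ℂ) ^ t = Fintype.card Fr := by rw [hr, Nat.cast_pow]
  have hq' : ((p : ℂ) ^ t) ^ s = Fintype.card Fq := by rw [hq, Nat.cast_pow, Nat.cast_pow]
  have hchar : ringChar Fr ≠ 2 := fun h ↦ Nat.not_even_iff_odd.mpr hp2.pow
    (hr ▸ Nat.even_iff.mpr (FiniteField.even_card_of_char_two h))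
  have : Algebra.IsQuadraticExtension Fq Fq2 := isQuadraticExtension_of_card_eq_sq (hq ▸ hq2)
  obtain rfl : N = Algebra.norm Fq := funext fun x ↦ (algebraMap Fq Fq2).injective
    ((hN x).trans (algebraMap_norm_eq_pow_card_succ x).symm)
  let : Algebra Fr Fq2 := ((algebraMap Fq Fq2).comp (algebraMap Fr Fq)).toAlgebra
  have : IsScalarTower Fr Fq Fq2 := .of_algebraMap_eq' rfl
  obtain ⟨ψ, hψ, hψχ⟩ :=
    exists_isPrimitive_traceAddChar_eq (L := Fq2) Fr (ZMod.isPrimitive_stdAddChar p)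
  obtain rfl : χ = traceAddChar Fq2 ψ := funext fun x ↦ by
    rw [hψχ, traceAddChar_apply, hχ, ZMod.stdAddChar_apply, ZMod.toCircle_apply]
  rw [hq', hr', hD]
  exact ⟨sum_filter_quadraticChar_trace_norm_of_eq_zero_or_eq_one hchar hψ ha,
    sum_filter_quadraticChar_trace_norm_of_eq_neg_one hchar hψ ha⟩
end

section
/- As (a_i, a_j) ranges over all ordered pairs of distinct elements of F_{q^2}, the inner product (1/K)·Σ_{x∈D} χ((a_i − a_j)x) takes exactly two values: it equals (1/K)·q(r−1)/(2r) for exactly ((r+1)/(2r))q^4 − ((r−1)/(2r))q^3 − q^2 ordered pairs, and it equals −(1/K)·q(r+1)/(2r) for exactly ((r−1)/(2r))(q^4 + q^3) ordered pairs. -/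
open Finset

/-!
Fix `b ≠ 0`, let `Q x = Tr (x ^ (q + 1))`, and write the canonical character of `F_{q ^ 2}` as
`x ↦ ψ (Tr x)` for a primitive character `ψ` of `F_r`.  Completing the square in the norm form
`x ^ (q + 1)` gives, for every nonzero `y` in `F_r`,
`∑ x, ψ (y * Q x) * χ (b * x) = -q * ψ (-(Q b / y))`.
Averaging this over `y` isolates the fibre `Q = 0`, and averaging it against the quadratic
character isolates `∑ x, η (Q x) * χ (b * x)`, the two Gauss sums cancelling because `η⁻¹ = η`.
The sum over `D` is a combination of the two, and depends only on whether `-Q b` is a nonsquare.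
Multiplication by an element of norm `-1` carries the set of such `b` onto `D`.
-/

namespace NormTrace

section AddChar

variable {k K : Type*} (L : Type*) {E : Type*} [Field k] [Field K] [Field L] [CommMonoid E]
  [Algebra k K] [Algebra K L]

/-- The additive character `x ↦ ψ (Tr x)` of an extension field `K` obtained from an additive
character `ψ` of `k`; this is how the canonical characters of finite fields are related. -/
noncomputable def traceChar (K : Type*) [Field K] [Algebra k K] (ψ : AddChar k E) : AddChar K E :=
  ψ.compAddMonoidHom (Algebra.trace k K).toAddMonoidHom

theorem traceChar_apply (ψ : AddChar k E) (x : K) :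
    traceChar K ψ x = ψ (Algebra.trace k K x) :=
  rfl

theorem isPrimitive_traceChar [FiniteDimensional k K] [Algebra.IsSeparable k K]
    {ψ : AddChar k E} (hψ : ψ.IsPrimitive) : (traceChar K ψ).IsPrimitive := by
  have hψ_ne : ψ ≠ 1 := by simpa using hψ one_ne_zero
  exact .of_ne_one <| (AddChar.compAddMonoidHom_injective_left (Algebra.trace k K).toAddMonoidHom
    (Algebra.trace_surjective k K)).ne hψ_ne

theorem exists_isPrimitive_traceChar_eq_exp (p : ℕ) [Fact p.Prime] [Algebra (ZMod p) L]
    [Finite L] :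
    ∃ ψ : AddChar k ℂ, ψ.IsPrimitive ∧ ∀ x : L, traceChar L (traceChar K ψ) x =
      Complex.exp (2 * Real.pi * Complex.I * ((Algebra.trace (ZMod p) L x).val : ℂ) / (p : ℂ)) := by
  have : Finite K := .of_injective _ (algebraMap K L).injective
  have : Finite k := .of_injective _ (algebraMap k K).injective
  have : CharP L p := charP_of_injective_algebraMap' (ZMod p) p
  have : CharP K p := (algebraMap K L).charP (algebraMap K L).injective p
  have : CharP k p := (algebraMap k K).charP (algebraMap k K).injective p
  let _ : Algebra (ZMod p) k := ZMod.algebra k p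
  let _ : Algebra (ZMod p) K := ZMod.algebra K p
  have : IsScalarTower (ZMod p) k K := .of_algebraMap_eq' (Subsingleton.elim _ _)
  have : IsScalarTower (ZMod p) K L := .of_algebraMap_eq' (Subsingleton.elim _ _)
  refine ⟨traceChar k ZMod.stdAddChar,
    isPrimitive_traceChar (k := ZMod p) (ZMod.isPrimitive_stdAddChar p), fun x ↦ ?_⟩
  simp only [traceChar_apply, Algebra.trace_trace]
  rw [ZMod.stdAddChar_apply, ZMod.toCircle_apply]

end AddChar

section Norm

variable {K L : Type*} [Field K] [Field L] [Algebra K L]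

theorem finite_of_finrank_eq_two [Finite K] (h2 : Module.finrank K L = 2) : Finite L :=
  have : FiniteDimensional K L := .of_finrank_pos (h2 ▸ two_pos)
  Module.finite_of_finite K

variable [Fintype K]

theorem finrank_eq_of_card_eq_pow [Fintype L] {n : ℕ} (h : Fintype.card L = Fintype.card K ^ n) :
    Module.finrank K L = n :=
  Nat.pow_right_injective Fintype.one_lt_card (Module.card_eq_pow_finrank.symm.trans h)

theorem algebraMap_norm_of_finrank_eq_two (h2 : Module.finrank K L = 2) (x : L) :
    algebraMap K L (Algebra.norm K x) = x ^ (Fintype.card K + 1) := by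
  have := finite_of_finrank_eq_two h2
  rw [FiniteField.algebraMap_norm_eq_pow_sum, h2, sum_range_succ, sum_range_one,
    pow_zero, pow_one, Nat.card_eq_fintype_card, add_comm]

theorem algebraMap_trace_of_finrank_eq_two (h2 : Module.finrank K L = 2) (x : L) :
    algebraMap K L (Algebra.trace K L x) = x + x ^ Fintype.card K := by
  have := finite_of_finrank_eq_two h2
  rw [FiniteField.algebraMap_trace_eq_sum_pow, h2, sum_range_succ, sum_range_one,
    pow_zero, pow_one, Nat.card_eq_fintype_card, pow_one]

theorem pow_card_pow_card_of_finrank_eq_two (h2 : Module.finrank K L = 2) (x : L) :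
    (x ^ Fintype.card K) ^ Fintype.card K = x := by
  have := finite_of_finrank_eq_two h2
  have := Fintype.ofFinite L
  rw [← pow_mul, ← sq, ← h2, ← Module.card_eq_pow_finrank (K := K) (V := L),
    FiniteField.pow_card]

theorem eq_norm_of_algebraMap_eq_pow (h2 : Module.finrank K L = 2) {N : L → K}
    (hN : ∀ x, algebraMap K L (N x) = x ^ (Fintype.card K + 1)) : N = Algebra.norm K :=
  funext fun x ↦ (algebraMap K L).injective <| by
    rw [hN, algebraMap_norm_of_finrank_eq_two h2]

theorem norm_add_pow_card (h2 : Module.finrank K L = 2) (x a : L) :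
    Algebra.norm K (x + a ^ Fintype.card K) =
      Algebra.norm K x + Algebra.trace K L (a * x) + Algebra.norm K a := by
  apply (algebraMap K L).injective
  have h_frob : (x + a ^ Fintype.card K) ^ Fintype.card K = x ^ Fintype.card K + a := by
    have h := map_add (FiniteField.frobeniusAlgHom K L) x (a ^ Fintype.card K)
    simpa only [FiniteField.coe_frobeniusAlgHom, pow_card_pow_card_of_finrank_eq_two h2] using h
  simp only [map_add, algebraMap_norm_of_finrank_eq_two h2,
    algebraMap_trace_of_finrank_eq_two h2, pow_succ, h_frob, mul_pow]
  ring

variable [Fintype L] {E : Type*} [CommRing E] [IsDomain E] {φ : AddChar K E}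

theorem card_sub_one_mul_sum_addChar_mul_norm (hφ : φ.IsPrimitive) {y : K} (hy : y ≠ 0) :
    ((Fintype.card K : E) - 1) * ∑ x : L, φ (y * Algebra.norm K x) =
      Fintype.card K - Fintype.card L := by
  classical
  have h_const (v : K) (hv : v ≠ 0) :
      ∑ x : L, φ (v * Algebra.norm K x) = ∑ x : L, φ (y * Algebra.norm K x) := by
    obtain ⟨g, hg⟩ := FiniteField.norm_surjective K L (v / y)
    have hg0 : g ≠ 0 := Algebra.norm_ne_zero_iff.mp (hg ▸ div_ne_zero hv hy)
    refine Fintype.sum_equiv (Equiv.mulLeft₀ g hg0) _ _ fun x ↦ ?_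
    rw [Equiv.mulLeft₀_apply, map_mul (Algebra.norm K), hg, ← mul_assoc, mul_div_cancel₀ _ hy]
  have h_total : ∑ v : K, ∑ x : L, φ (v * Algebra.norm K x) = Fintype.card K := by
    rw [sum_comm]
    simp [AddChar.sum_mulShift _ hφ, Algebra.norm_eq_zero_iff]
  rw [← add_sum_erase _ _ (mem_univ (0 : K)),
    sum_congr rfl fun v hv ↦ h_const v (ne_of_mem_erase hv)] at h_total
  simp only [zero_mul, AddChar.map_zero_eq_one, sum_const, card_univ, nsmul_eq_mul, mul_one,
    card_erase_of_mem (mem_univ _), Nat.cast_pred Fintype.card_pos] at h_total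
  linear_combination h_total

theorem sum_addChar_mul_norm_of_finrank_eq_two [CharZero E] (h2 : Module.finrank K L = 2)
    (hφ : φ.IsPrimitive) {y : K} (hy : y ≠ 0) :
    ∑ x : L, φ (y * Algebra.norm K x) = -(Fintype.card K : E) := by
  have h_card : (Fintype.card L : E) = (Fintype.card K : E) ^ 2 := by
    rw [Module.card_eq_pow_finrank (K := K) (V := L), h2, Nat.cast_pow]
  have h_ne : (Fintype.card K : E) - 1 ≠ 0 :=
    sub_ne_zero.mpr (Nat.cast_ne_one.mpr Fintype.one_lt_card.ne')
  apply mul_left_cancel₀ h_ne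
  rw [card_sub_one_mul_sum_addChar_mul_norm hφ hy, h_card]
  ring

theorem sum_addChar_mul_norm_add_trace [CharZero E] (h2 : Module.finrank K L = 2)
    (hφ : φ.IsPrimitive) {y : K} (hy : y ≠ 0) (b : L) :
    ∑ x : L, φ (y * Algebra.norm K x + Algebra.trace K L (b * x)) =
      -Fintype.card K * φ (-(Algebra.norm K b / y)) := by
  have h_square (x : L) :
      y * Algebra.norm K (x + (y⁻¹ • b) ^ Fintype.card K) - Algebra.norm K b / y =
        y * Algebra.norm K x + Algebra.trace K L (b * x) := by
    rw [norm_add_pow_card h2, smul_mul_assoc, map_smul, Algebra.smul_def y⁻¹ b,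
      map_mul (Algebra.norm K), Algebra.norm_algebraMap, h2, smul_eq_mul]
    field_simp
    ring
  simp only [← h_square, sub_eq_add_neg, AddChar.map_add_eq_mul]
  rw [← sum_mul, ← sum_addChar_mul_norm_of_finrank_eq_two h2 hφ hy,
    ← Equiv.sum_comp (Equiv.addRight ((y⁻¹ • b) ^ Fintype.card K))
      fun x ↦ φ (y * Algebra.norm K x)]
  rfl

end Norm

section CharacterSums

variable {k X E : Type*} [Field k] [Fintype k] [Fintype X]

theorem two_mul_sum_filter_quadraticChar_eq_neg_one [DecidableEq k] [CommRing E]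
    (Q : X → k) (w : X → E) :
    2 * ∑ x with quadraticChar k (Q x) = -1, w x =
      ∑ x, w x - ∑ x with Q x = 0, w x - ∑ x, quadraticChar k (Q x) * w x := by
  rw [sum_filter, sum_filter, ← sum_sub_distrib, ← sum_sub_distrib, mul_sum]
  refine sum_congr rfl fun x _ ↦ ?_
  rcases eq_or_ne (Q x) 0 with h | h
  · simp [h]
  · rcases quadraticChar_dichotomy h with h' | h' <;> simp [h, h', two_mul]

theorem sum_sum_addChar_mul [DecidableEq k] [CommRing E] [IsDomain E] {ψ : AddChar k E}
    (hψ : ψ.IsPrimitive) (Q : X → k) (w : X → E) :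
    ∑ y, ∑ x, ψ (y * Q x) * w x = Fintype.card k * ∑ x with Q x = 0, w x := by
  rw [sum_comm, mul_sum, sum_filter]
  refine sum_congr rfl fun x _ ↦ ?_
  rw [← sum_mul, AddChar.sum_mulShift _ hψ]
  split_ifs <;> simp

theorem sum_mulChar_mul_addChar_mul [CommRing E] [IsDomain E] {η : MulChar k E} (hη : η ≠ 1)
    (ψ : AddChar k E) (a : k) : ∑ y, η y * ψ (y * a) = η⁻¹ a * gaussSum η ψ := by
  rcases eq_or_ne a 0 with rfl | ha
  · simp [MulChar.sum_eq_zero_of_ne_one hη, MulChar.map_zero]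
  · simpa [gaussSum, mul_comm a] using gaussSum_mulShift_eq η ψ (Units.mk0 a ha)

theorem gaussSum_mul_sum_inv_mulChar_mul [CommRing E] [IsDomain E] {η : MulChar k E}
    (hη : η ≠ 1) (ψ : AddChar k E) (Q : X → k) (w : X → E) :
    gaussSum η ψ * ∑ x, η⁻¹ (Q x) * w x = ∑ y, η y * ∑ x, ψ (y * Q x) * w x := by
  simp only [mul_sum]
  rw [sum_comm]
  refine sum_congr rfl fun x _ ↦ ?_
  simp only [← mul_assoc]
  rw [← sum_mul, sum_mulChar_mul_addChar_mul hη, mul_comm (gaussSum η ψ)]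

section Reciprocal

variable [Field E] {ψ : AddChar k E} {Q : X → k} {w : X → E} {c : E} {e : k}

theorem card_mul_sum_filter_eq_zero [DecidableEq k] (hψ : ψ.IsPrimitive)
    (hT : ∀ y ≠ 0, ∑ x, ψ (y * Q x) * w x = c * ψ (-(e / y))) :
    Fintype.card k * ∑ x with Q x = 0, w x =
      ∑ x, w x + c * ((if e = 0 then (Fintype.card k : E) else 0) - 1) := by
  have h_recip : ∑ y, ψ (-(e / y)) = if e = 0 then (Fintype.card k : E) else 0 := by
    rw [← Equiv.sum_comp (Equiv.inv k)]
    simpa [mul_comm] using AddChar.sum_mulShift (-e) hψ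
  rw [← add_sum_erase _ _ (mem_univ (0 : k))] at h_recip
  rw [← sum_sum_addChar_mul hψ, ← add_sum_erase _ _ (mem_univ (0 : k)),
    sum_congr rfl fun y hy ↦ hT y (ne_of_mem_erase hy), ← mul_sum, ← h_recip]
  simp

theorem gaussSum_mul_sum_inv_mulChar_mul_eq {η : MulChar k E} (hη : η ≠ 1)
    (hT : ∀ y ≠ 0, ∑ x, ψ (y * Q x) * w x = c * ψ (-(e / y))) :
    gaussSum η ψ * ∑ x, η⁻¹ (Q x) * w x = c * (η (-e) * gaussSum η⁻¹ ψ) := by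
  have h_term (y : k) : η y * ∑ x, ψ (y * Q x) * w x = c * (η⁻¹ y⁻¹ * ψ (y⁻¹ * -e)) := by
    rw [MulChar.inv_apply', inv_inv]
    rcases eq_or_ne y 0 with rfl | hy
    · simp [MulChar.map_zero]
    · rw [hT y hy, show -(e / y) = y⁻¹ * -e by ring]
      ring
  calc gaussSum η ψ * ∑ x, η⁻¹ (Q x) * w x
      = c * ∑ y : k, η⁻¹ y⁻¹ * ψ (y⁻¹ * -e) := by
        rw [gaussSum_mul_sum_inv_mulChar_mul hη, mul_sum, sum_congr rfl fun y _ ↦ h_term y]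
    _ = c * ∑ y, η⁻¹ y * ψ (y * -e) := by
        rw [← Equiv.sum_comp (Equiv.inv k) fun y ↦ η⁻¹ y * ψ (y * -e)]
        rfl
    _ = c * (η (-e) * gaussSum η⁻¹ ψ) := by
        rw [sum_mulChar_mul_addChar_mul (inv_ne_one.mpr hη), inv_inv]

theorem sum_quadraticChar_mul [DecidableEq k] [CharZero E] (hk : ringChar k ≠ 2)
    (hψ : ψ.IsPrimitive) (hT : ∀ y ≠ 0, ∑ x, ψ (y * Q x) * w x = c * ψ (-(e / y))) :
    ∑ x, (quadraticChar k (Q x) : E) * w x = c * quadraticChar k (-e) := by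
  set η : MulChar k E := (quadraticChar k).ringHomComp (Int.castRingHom E)
  have hη : η ≠ 1 :=
    (MulChar.ringHomComp_ne_one_iff (RingHom.injective_int _)).mpr (quadraticChar_ne_one hk)
  have hη_inv : η⁻¹ = η := ((quadraticChar_isQuadratic k).comp _).inv
  have h_gauss : gaussSum η ψ ≠ 0 :=
    gaussSum_ne_zero_of_nontrivial (Nat.cast_ne_zero.mpr Fintype.card_ne_zero) hη hψ
  have h := gaussSum_mul_sum_inv_mulChar_mul_eq hη hT
  rw [hη_inv, ← mul_assoc, mul_comm _ (gaussSum η ψ)] at h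
  exact mul_left_cancel₀ h_gauss h

theorem sum_filter_quadraticChar_eq_neg_one [DecidableEq k] [CharZero E] (hk : ringChar k ≠ 2)
    (hψ : ψ.IsPrimitive) (hw : ∑ x, w x = 0)
    (hT : ∀ y ≠ 0, ∑ x, ψ (y * Q x) * w x = c * ψ (-(e / y))) :
    ∑ x with quadraticChar k (Q x) = -1, w x =
      if quadraticChar k (-e) = -1 then c * (Fintype.card k + 1) / (2 * Fintype.card k)
      else -(c * (Fintype.card k - 1) / (2 * Fintype.card k)) := by
  have h_card : (Fintype.card k : E) ≠ 0 := Nat.cast_ne_zero.mpr Fintype.card_ne_zero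
  have h_two := two_mul_sum_filter_quadraticChar_eq_neg_one Q w
  have h_zero := card_mul_sum_filter_eq_zero hψ hT
  rw [sum_quadraticChar_mul hk hψ hT] at h_two
  rcases eq_or_ne e 0 with rfl | he
  · rw [neg_zero, quadraticChar_zero] at h_two ⊢
    simp only [↓reduceIte, Int.cast_zero, mul_zero, sub_zero] at h_zero h_two
    rw [if_neg (by decide)]
    field_simp
    linear_combination (Fintype.card k : E) * h_two - h_zero + (Fintype.card k - 1 : E) * hw
  · rw [if_neg he] at h_zero
    rcases quadraticChar_dichotomy (neg_ne_zero.mpr he) with h | h <;>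
    · rw [h] at h_two ⊢
      push_cast at h_two
      simp only [reduceCtorEq, ↓reduceIte, Int.reduceNeg]
      field_simp
      linear_combination (Fintype.card k : E) * h_two - h_zero + (Fintype.card k - 1 : E) * hw

end Reciprocal

end CharacterSums

theorem mul_sub_one_div_ne_neg_mul_add_one_div {E : Type*} [Field E] [CharZero E] {c q r : E}
    (hc : c ≠ 0) (hq : q ≠ 0) (hr : r ≠ 0) :
    c * (q * (r - 1) / (2 * r)) ≠ -(c * (q * (r + 1) / (2 * r))) := by
  have h_sub : c * (q * (r - 1) / (2 * r)) - -(c * (q * (r + 1) / (2 * r))) = c * q := by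
    field_simp
    ring
  exact sub_ne_zero.mp (h_sub ▸ mul_ne_zero hc hq)

section TraceNorm

variable {k K L : Type*} [Field k] [Field K] [Field L] [Algebra k K] [Algebra K L]

/-- The form `x ↦ Tr (N x)` from `L` to `k`, where `N` is the norm of `L / K` and `Tr` the trace
of `K / k`.  For `L / K` a quadratic extension of finite fields it is `x ↦ Tr (x ^ (q + 1))`. -/
noncomputable def traceNorm (k K : Type*) {L : Type*} [Field k] [Field K] [Field L] [Algebra k K]
    [Algebra K L] (x : L) : k :=
  Algebra.trace k K (Algebra.norm K x)

theorem sum_addChar_mul_traceNorm_mul [Fintype K] [Fintype L] {E : Type*}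
    [CommRing E] [IsDomain E] [CharZero E] (h2 : Module.finrank K L = 2) {ψ : AddChar k E}
    (hψ : ψ.IsPrimitive) (b : L) {y : k} (hy : y ≠ 0) :
    ∑ x : L, ψ (y * traceNorm k K x) * traceChar L (traceChar K ψ) (b * x) =
      -Fintype.card K * ψ (-(traceNorm k K b / y)) := by
  have : Finite k := .of_injective _ (algebraMap k K).injective
  have h_const : Algebra.trace k K (-(Algebra.norm K b / algebraMap k K y)) =
      -(traceNorm k K b / y) := by
    rw [traceNorm, map_neg, div_eq_inv_mul, ← map_inv₀, ← Algebra.smul_def, map_smul,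
      smul_eq_mul, ← div_eq_inv_mul]
  rw [← h_const, ← traceChar_apply ψ, ← sum_addChar_mul_norm_add_trace h2
    (isPrimitive_traceChar hψ) ((map_ne_zero _).mpr hy)]
  refine sum_congr rfl fun x _ ↦ ?_
  rw [AddChar.map_add_eq_mul, ← Algebra.smul_def, traceChar_apply, traceChar_apply,
    traceChar_apply, map_smul, smul_eq_mul, traceNorm]

theorem sum_traceChar_of_quadraticChar_traceNorm [Fintype k] [DecidableEq k] [Fintype K]
    [Fintype L] {E : Type*} [Field E] [CharZero E] (hk : ringChar k ≠ 2)
    (h2 : Module.finrank K L = 2) {ψ : AddChar k E} (hψ : ψ.IsPrimitive) {b : L} (hb : b ≠ 0) :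
    ∑ x : L with quadraticChar k (traceNorm k K x) = -1, traceChar L (traceChar K ψ) (b * x) =
      if quadraticChar k (-traceNorm k K b) = -1 then
        -(Fintype.card K * (Fintype.card k + 1) / (2 * Fintype.card k) : E)
      else Fintype.card K * (Fintype.card k - 1) / (2 * Fintype.card k) := by
  have h_sum : ∑ x, traceChar L (traceChar K ψ) (b * x) = 0 :=
    AddChar.sum_eq_zero_of_ne_one (isPrimitive_traceChar (isPrimitive_traceChar hψ) hb)
  rw [sum_filter_quadraticChar_eq_neg_one hk hψ h_sum fun y hy ↦
    sum_addChar_mul_traceNorm_mul h2 hψ b hy]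
  simp only [neg_mul, neg_div, neg_neg]

theorem traceNorm_surjective [Finite L] : Function.Surjective (traceNorm k K : L → k) := by
  have : Finite K := .of_injective _ (algebraMap K L).injective
  have : Finite k := .of_injective _ (algebraMap k K).injective
  exact (Algebra.trace_surjective k K).comp (FiniteField.norm_surjective K L)

theorem card_filter_quadraticChar_traceNorm_ne_zero [Fintype k] [DecidableEq k] [Fintype L]
    (hk : ringChar k ≠ 2) : #{x : L | quadraticChar k (traceNorm k K x) = -1} ≠ 0 := by
  obtain ⟨c, hc⟩ := quadraticChar_exists_neg_one hk
  obtain ⟨x, rfl⟩ := traceNorm_surjective (K := K) (L := L) c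
  exact card_ne_zero_of_mem (mem_filter_univ x |>.mpr hc)

theorem card_filter_mul_traceNorm [Fintype L] (P : k → Prop) [DecidablePred P] {c : k}
    (hc : c ≠ 0) :
    #{x : L | P (c * traceNorm k K x)} = #{x : L | P (traceNorm k K x)} := by
  have : Finite K := .of_injective _ (algebraMap K L).injective
  obtain ⟨g, hg⟩ := FiniteField.norm_surjective K L (algebraMap k K c)
  have hg0 : g ≠ 0 := Algebra.norm_ne_zero_iff.mp (hg ▸ (map_ne_zero _).mpr hc)
  refine card_equiv (Equiv.mulLeft₀ g hg0) fun x ↦ ?_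
  have h_twist : traceNorm k K (g * x) = c * traceNorm k K x := by
    rw [traceNorm, map_mul, hg, ← Algebra.smul_def, map_smul, smul_eq_mul, traceNorm]
  rw [mem_filter_univ, mem_filter_univ, Equiv.mulLeft₀_apply, h_twist]

end TraceNorm

section Differences

variable {G : Type*} [AddGroup G]

theorem ncard_setOf_sub_mem (S : Set G) :
    {pr : G × G | pr.1 - pr.2 ∈ S}.ncard = Nat.card G * S.ncard := by
  let shear : G × G ≃ G × G := (Equiv.prodComm G G).trans (.prodShear (.refl G) Equiv.subRight)
  rw [← Set.ncard_univ, ← Set.ncard_prod,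
    ← Set.ncard_preimage_of_injective_subset_range (s := Set.univ ×ˢ S) shear.injective (by simp)]
  congr 1
  ext pr
  simp [shear]

variable [Fintype G] {P : G → Prop} [DecidablePred P] {E : Type*} {f : G × G → E} {a b : E}

theorem ncard_ne_and_eq_of_sub (hab : a ≠ b) (h0 : ¬P 0)
    (hf : ∀ pr : G × G, pr.1 ≠ pr.2 → f pr = if P (pr.1 - pr.2) then b else a) :
    {pr : G × G | pr.1 ≠ pr.2 ∧ f pr = b}.ncard = Fintype.card G * #{x | P x} := by
  rw [← Nat.card_eq_fintype_card, ← Set.ncard_coe_finset, ← ncard_setOf_sub_mem]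
  congr 1
  ext pr
  rcases eq_or_ne pr.1 pr.2 with h | h
  · simp [h, h0]
  · by_cases hP : P (pr.1 - pr.2) <;> simp [h, hf pr h, hP, hab]

theorem ncard_ne_and_eq_of_not_sub {R : Type*} [Ring R] (hab : a ≠ b) (h0 : ¬P 0)
    (hf : ∀ pr : G × G, pr.1 ≠ pr.2 → f pr = if P (pr.1 - pr.2) then b else a) :
    ({pr : G × G | pr.1 ≠ pr.2 ∧ f pr = a}.ncard : R) =
      Fintype.card G ^ 2 - Fintype.card G * (#{x | P x} + 1) := by
  classical
  let S : Finset G := {x | P x}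
  have h0_mem : 0 ∉ S := by simpa [S] using h0
  have h_diff : {pr : G × G | pr.1 ≠ pr.2 ∧ f pr = a} = {pr | pr.1 - pr.2 ∈ (insert 0 S)ᶜ} := by
    ext pr
    rcases eq_or_ne pr.1 pr.2 with h | h
    · simp [h]
    · by_cases hP : P (pr.1 - pr.2) <;> simp [S, h, hf pr h, hP, hab.symm, sub_eq_zero]
  have h_count : {pr : G × G | pr.1 - pr.2 ∈ (insert 0 S)ᶜ}.ncard =
      Fintype.card G * #(insert 0 S)ᶜ := by
    rw [← Nat.card_eq_fintype_card, ← Set.ncard_coe_finset]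
    exact ncard_setOf_sub_mem _
  have h_compl : #(insert 0 S)ᶜ + (#S + 1) = Fintype.card G := by
    rw [← card_insert_of_notMem h0_mem, card_compl_add_card]
  rw [h_diff, h_count, eq_sub_iff_add_eq, sq]
  exact_mod_cast congrArg (Nat.cast : ℕ → R) <|
    (mul_add _ _ _).symm.trans (congrArg (Fintype.card G * ·) h_compl)

end Differences

end NormTrace

/-- As `(a_i, a_j)` ranges over all ordered pairs of distinct elements of
`F_{q^2}`, the inner product `(1/K)·Σ_{x∈D} χ((a_i − a_j)x)` takes exactly two values:
`(1/K)·q(r−1)/(2r)` for exactly `((r+1)/(2r))q^4 − ((r−1)/(2r))q^3 − q^2` ordered pairs,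
and `−(1/K)·q(r+1)/(2r)` for exactly `((r−1)/(2r))(q^4 + q^3)` ordered pairs.  Here
`K = #D = q(q+1)(r−1)/(2r)`. -/
theorem stmt9 (p t s : ℕ) [Fact p.Prime] (hp2 : Odd p) (ht : 0 < t) (hs : 0 < s)
    (Fr Fq Fq2 : Type) [Field Fr] [Fintype Fr] [DecidableEq Fr]
    [Field Fq] [Fintype Fq] [Field Fq2] [Fintype Fq2] [DecidableEq Fq2]
    [Algebra (ZMod p) Fq2] [Algebra Fr Fq] [Algebra Fq Fq2]
    (hr : Fintype.card Fr = p ^ t) (hq : Fintype.card Fq = (p ^ t) ^ s)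
    (hq2 : Fintype.card Fq2 = ((p ^ t) ^ s) ^ 2)
    (N : Fq2 → Fq) (hN : ∀ x : Fq2, algebraMap Fq Fq2 (N x) = x ^ (Fintype.card Fq + 1))
    (χ : Fq2 → ℂ)
    (hχ : ∀ x : Fq2, χ x = Complex.exp (2 * Real.pi * Complex.I *
      ((Algebra.trace (ZMod p) Fq2 x).val : ℂ) / (p : ℂ)))
    (D : Finset Fq2)
    (hD : D = Finset.univ.filter
      (fun x : Fq2 => quadraticChar Fr (Algebra.trace Fr Fq (N x)) = -1))
    (hK : (D.card : ℚ) = ((p : ℚ) ^ t) ^ s * (((p : ℚ) ^ t) ^ s + 1) *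
      ((p : ℚ) ^ t - 1) / (2 * (p : ℚ) ^ t))
    (f : Fq2 × Fq2 → ℂ)
    (hf : ∀ pr : Fq2 × Fq2,
      f pr = (1 / (D.card : ℂ)) * ∑ x ∈ D, χ ((pr.1 - pr.2) * x))
    (v₁ v₂ : ℂ)
    (hv₁ : v₁ = (1 / (D.card : ℂ)) *
      (((p : ℂ) ^ t) ^ s * ((p : ℂ) ^ t - 1) / (2 * (p : ℂ) ^ t)))
    (hv₂ : v₂ = -((1 / (D.card : ℂ)) *
      (((p : ℂ) ^ t) ^ s * ((p : ℂ) ^ t + 1) / (2 * (p : ℂ) ^ t)))) :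
    (∀ pr : Fq2 × Fq2, pr.1 ≠ pr.2 → f pr = v₁ ∨ f pr = v₂) ∧
    ((Set.ncard {pr : Fq2 × Fq2 | pr.1 ≠ pr.2 ∧ f pr = v₁} : ℚ) =
      (((p : ℚ) ^ t + 1) / (2 * (p : ℚ) ^ t)) * (((p : ℚ) ^ t) ^ s) ^ 4 -
        (((p : ℚ) ^ t - 1) / (2 * (p : ℚ) ^ t)) * (((p : ℚ) ^ t) ^ s) ^ 3 -
        (((p : ℚ) ^ t) ^ s) ^ 2) ∧
    ((Set.ncard {pr : Fq2 × Fq2 | pr.1 ≠ pr.2 ∧ f pr = v₂} : ℚ) =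
      (((p : ℚ) ^ t - 1) / (2 * (p : ℚ) ^ t)) *
        ((((p : ℚ) ^ t) ^ s) ^ 4 + (((p : ℚ) ^ t) ^ s) ^ 3)) := by
  have hk : ringChar Fr ≠ 2 := FiniteField.even_card_iff_char_two.not.mpr <| by
    simpa [hr, ← Nat.odd_iff] using hp2.pow
  have h2 : Module.finrank Fq Fq2 = 2 := NormTrace.finrank_eq_of_card_eq_pow (by rw [hq2, hq])
  obtain rfl := NormTrace.eq_norm_of_algebraMap_eq_pow h2 hN
  obtain ⟨ψ, hψ, hχψ⟩ := NormTrace.exists_isPrimitive_traceChar_eq_exp (k := Fr) (K := Fq) Fq2 p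
  replace hD : D = ({x | quadraticChar Fr (NormTrace.traceNorm Fr Fq x) = -1} : Finset Fq2) := hD
  let P (b : Fq2) : Prop := quadraticChar Fr (-NormTrace.traceNorm Fr Fq b) = -1
  have hP_zero : ¬P 0 := by simp [P, NormTrace.traceNorm]
  have hP_card : #{b | P b} = #D := by
    simpa only [neg_one_mul, hD] using NormTrace.card_filter_mul_traceNorm (K := Fq)
      (quadraticChar Fr · = -1) (neg_ne_zero.mpr one_ne_zero)
  have hf_eq (pr : Fq2 × Fq2) (hne : pr.1 ≠ pr.2) : f pr = if P (pr.1 - pr.2) then v₂ else v₁ := by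
    rw [hf, hv₁, hv₂, ← mul_neg, ← mul_ite]
    simpa only [hχψ, ← hχ, hr, hq, Nat.cast_pow, ← hD] using congrArg (1 / (#D : ℂ) * ·) <|
      NormTrace.sum_traceChar_of_quadraticChar_traceNorm hk h2 hψ (sub_ne_zero.mpr hne)
  have hD_ne : #D ≠ 0 := hD ▸ NormTrace.card_filter_quadraticChar_traceNorm_ne_zero hk
  have hp_ne : p ≠ 0 := NeZero.ne p
  have hv_ne : v₁ ≠ v₂ := hv₁ ▸ hv₂ ▸ NormTrace.mul_sub_one_div_ne_neg_mul_add_one_div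
    (by simpa using hD_ne) (by simp [hp_ne]) (by simp [hp_ne])
  refine ⟨fun pr hne ↦ hf_eq pr hne ▸ (ite_eq_or_eq _ _ _).symm, ?_, ?_⟩
  · rw [NormTrace.ncard_ne_and_eq_of_not_sub hv_ne hP_zero hf_eq, hP_card, hq2]
    push_cast [hK]
    field_simp
    ring
  · rw [NormTrace.ncard_ne_and_eq_of_sub hv_ne hP_zero hf_eq, hP_card, hq2]
    push_cast [hK]
    field_simp
end
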